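/- Let A ∈ ℝ^{m×n} have columns of unit ℓ2-norm and mutual coherence μ, let k ≥ 2 be an integer with μ < 1/(2k−1), let b = Ax + z with ‖z‖₂ ≤ ε, let λ > 0, and let x^♯ be a minimizer of u ↦ ‖u‖₁ + (1/(2λ))‖b − Au‖₂². Then ‖x^♯ − x‖₂ ≤ C₃·‖x − x_[k]‖₁ + C₄, where C₃ = (2√k·α₁·f_k(α₂)·λ + 2·g_k(α₂)·ε)/(√k·(1 − √k·α₂)·(√k·α₁·λ + ε)) and C₄ = (√k·α₁·(5 + 2√k·α₂)·λ + 2·g_k(α₂)·ε)·(√k·α₁·λ + ε)/(√k·(1 − √k·α₂)·λ), with α₁ = √(1+(k−1)μ)/(1−(k−1)μ), α₂ = √k·μ/(1−(k−1)μ), f_k(t) = k t² + 3√k t + 3, and g_k(t) = 2k t² + 4√k t + 1. -/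

import Mathlib

noncomputable def l2norm {ι : Type*} [Fintype ι] (v : ι → ℝ) : ℝ :=
  Real.sqrt (∑ i, (v i) ^ 2)

noncomputable def l1norm {ι : Type*} [Fintype ι] (v : ι → ℝ) : ℝ :=
  ∑ i, |v i|

noncomputable def linfnorm {ι : Type*} [Fintype ι] (v : ι → ℝ) : ℝ :=
  ⨆ i, |v i|

/-- The mutual coherence of a matrix: the largest absolute inner product
between two distinct columns. -/
noncomputable def mutualCoherence {m n : ℕ} (A : Matrix (Fin m) (Fin n) ℝ) : ℝ :=
  ⨆ p : {p : Fin n × Fin n // p.1 ≠ p.2}, |∑ r, A r p.1.1 * A r p.1.2|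

/-- `restrict v E` agrees with `v` on `E` and vanishes outside of `E`. -/
def restrict {n : ℕ} (v : Fin n → ℝ) (E : Finset (Fin n)) : Fin n → ℝ :=
  fun i => if i ∈ E then v i else 0

/-- A vector is `k`-sparse if it has at most `k` nonzero entries. -/
def sparse {n : ℕ} (k : ℕ) (v : Fin n → ℝ) : Prop :=
  (Finset.univ.filter fun i => v i ≠ 0).card ≤ k

noncomputable def alpha1 (k : ℕ) (μ : ℝ) : ℝ :=
  Real.sqrt (1 + ((k : ℝ) - 1) * μ) / (1 - ((k : ℝ) - 1) * μ)

noncomputable def alpha2 (k : ℕ) (μ : ℝ) : ℝ :=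
  Real.sqrt k * μ / (1 - ((k : ℝ) - 1) * μ)

noncomputable def fk (k : ℕ) (t : ℝ) : ℝ :=
  (k : ℝ) * t ^ 2 + 3 * Real.sqrt k * t + 3

noncomputable def gk (k : ℕ) (t : ℝ) : ℝ :=
  2 * (k : ℝ) * t ^ 2 + 4 * Real.sqrt k * t + 1

/-!
Write `h = x^♯ - x`, let `F` carry the `k` largest entries of `h`, and put `q = ‖h_F‖₁`,
`p = ‖h_{Fᶜ}‖₁`, `t = ‖A h‖₂`, `σ = ‖x - x_[k]‖₁`, `s = √k α₂`, `a = √k α₁`, `D = a λ + ε`.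
Low coherence makes `AᵀA` close to the identity on `k`-sparse vectors, so that
`q ≤ √k ‖h_F‖₂ ≤ a t + s p`. Comparing the objective at `x^♯` and at `x` gives
`t² ≤ 2 ε t + 2 λ (q - p + 2 σ)`, hence `t² + 2 λ (1 - s) p ≤ 2 D t + 4 λ σ`. This quadratic
inequality bounds both `t` and `(1 - s) p`, and `√k ‖h‖₂ ≤ √k ‖h_F‖₂ + (p + q) / 2` converts
these bounds into one on `‖h‖₂`.
-/

open scoped Finset Matrix

section Norms

variable {ι : Type*} [Fintype ι]

lemma l1norm_nonneg (v : ι → ℝ) : 0 ≤ l1norm v :=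
  Finset.sum_nonneg fun _ _ => abs_nonneg _

lemma l2norm_nonneg (v : ι → ℝ) : 0 ≤ l2norm v :=
  Real.sqrt_nonneg _

lemma l2norm_sq (v : ι → ℝ) : l2norm v ^ 2 = ∑ i, v i ^ 2 :=
  Real.sq_sqrt (Finset.sum_nonneg fun _ _ => sq_nonneg _)

lemma dotProduct_self_eq_l2norm_sq (v : ι → ℝ) : v ⬝ᵥ v = l2norm v ^ 2 := by
  rw [l2norm_sq]
  simp only [dotProduct, pow_two]

lemma l2norm_eq_norm_toLp (v : ι → ℝ) : l2norm v = ‖WithLp.toLp 2 v‖ := by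
  simp [l2norm, EuclideanSpace.norm_eq]

lemma l2norm_add_le (u v : ι → ℝ) : l2norm (u + v) ≤ l2norm u + l2norm v := by
  simpa only [l2norm_eq_norm_toLp, WithLp.toLp_add] using norm_add_le _ _

lemma dotProduct_le_l2norm_mul_l2norm (u v : ι → ℝ) : u ⬝ᵥ v ≤ l2norm u * l2norm v :=
  Real.sum_mul_le_sqrt_mul_sqrt _ _ _

lemma l2norm_sub_sq (u v : ι → ℝ) :
    l2norm (u - v) ^ 2 = l2norm u ^ 2 - 2 * (u ⬝ᵥ v) + l2norm v ^ 2 := by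
  simp only [← dotProduct_self_eq_l2norm_sq, sub_dotProduct, dotProduct_sub, dotProduct_comm v u]
  ring

lemma l1norm_sq_le_of_card_support_le {k : ℕ} {u : ι → ℝ} (hu : #{i | u i ≠ 0} ≤ k) :
    l1norm u ^ 2 ≤ k * l2norm u ^ 2 := by
  have hsupp : l1norm u = ∑ i with u i ≠ 0, |u i| :=
    (Finset.sum_filter_of_ne fun _ _ => abs_ne_zero.mp).symm
  calc l1norm u ^ 2 ≤ #{i | u i ≠ 0} * ∑ i with u i ≠ 0, |u i| ^ 2 :=
        hsupp ▸ sq_sum_le_card_mul_sum_sq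
    _ ≤ k * l2norm u ^ 2 := by
        simp only [l2norm_sq, sq_abs]
        gcongr
        exact Finset.subset_univ _

lemma l1norm_le_sqrt_mul_l2norm_of_card_support_le {k : ℕ} {u : ι → ℝ}
    (hu : #{i | u i ≠ 0} ≤ k) : l1norm u ≤ √k * l2norm u := by
  refine le_of_sq_le_sq ?_ (mul_nonneg (Real.sqrt_nonneg _) (l2norm_nonneg u))
  rw [mul_pow, Real.sq_sqrt k.cast_nonneg]
  exact l1norm_sq_le_of_card_support_le hu

lemma card_support_indicator_le {k : ℕ} {F : Finset ι} (hF : #F ≤ k) (v : ι → ℝ) :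
    #{i | (F : Set ι).indicator v i ≠ 0} ≤ k := by
  refine (Finset.card_le_card fun i hi => ?_).trans hF
  exact Finset.mem_coe.mp (Set.mem_of_indicator_ne_zero (Finset.mem_filter.mp hi).2)

lemma l1norm_indicator (F : Finset ι) (v : ι → ℝ) :
    l1norm ((F : Set ι).indicator v) = ∑ i ∈ F, |v i| := by
  classical
  simp [l1norm, Set.indicator_apply, apply_ite abs, Finset.sum_ite_mem]

lemma l1norm_indicator_add_l1norm_indicator_compl (S : Set ι) (v : ι → ℝ) :
    l1norm (S.indicator v) + l1norm (Sᶜ.indicator v) = l1norm v := by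
  classical
  rw [l1norm, l1norm, ← Finset.sum_add_distrib]
  refine Finset.sum_congr rfl fun i _ => ?_
  by_cases hi : i ∈ S <;> simp [hi]

/-- Where `w` vanishes, `|x| - |y| ≤ 2 |x| - |y - x|`; elsewhere `|x| - |y| ≤ |y - x|`. -/
lemma l1norm_sub_l1norm_le (x y w : ι → ℝ) :
    l1norm x - l1norm y ≤
      2 * ∑ i with w i ≠ 0, |(y - x) i| - l1norm (y - x) + 2 * l1norm (x - w) := by
  simp only [l1norm, Finset.sum_filter, Finset.mul_sum, ← Finset.sum_sub_distrib,
    ← Finset.sum_add_distrib, Pi.sub_apply]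
  refine Finset.sum_le_sum fun i _ => ?_
  by_cases hi : w i = 0
  · simp only [hi, ne_eq, not_true_eq_false, if_false, sub_zero]
    linarith [abs_sub (y i) (x i)]
  · simp only [hi, ne_eq, not_false_eq_true, if_true]
    linarith [abs_sub_abs_le_abs_sub (x i) (y i), abs_sub_comm (x i) (y i),
      abs_nonneg (x i - w i)]

end Norms

section TopSupport

variable {ι : Type*} {k : ℕ} {F : Finset ι}

/-- `F` carries `k` largest entries of `f`: it maximizes the sum of `f` among the sets of at most
`k` indices. For nonnegative `f`, this allows `F` to have fewer than `k` elements only if `f`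
vanishes outside of `F`. -/
structure IsTopSupport (f : ι → ℝ) (k : ℕ) (F : Finset ι) : Prop where
  card_le : #F ≤ k
  sum_le : ∀ E : Finset ι, #E ≤ k → ∑ i ∈ E, f i ≤ ∑ i ∈ F, f i

lemma exists_isTopSupport [Finite ι] (f : ι → ℝ) (k : ℕ) : ∃ F, IsTopSupport f k F := by
  obtain ⟨F, hcard, hmax⟩ := Set.exists_max_image {F : Finset ι | #F ≤ k}
    (fun F => ∑ i ∈ F, f i) (Set.toFinite _) ⟨∅, by simp⟩
  exact ⟨F, hcard, hmax⟩

namespace IsTopSupport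

lemma apply_le_apply {f : ι → ℝ} (hF : IsTopSupport f k F) {i j : ι} (hi : i ∈ F) (hj : j ∉ F) :
    f j ≤ f i := by
  classical
  have hj' : j ∉ F.erase i := fun h => hj (Finset.mem_of_mem_erase h)
  have hcard : #(insert j (F.erase i)) ≤ k := by
    rw [Finset.card_insert_of_notMem hj', Finset.card_erase_add_one hi]
    exact hF.card_le
  have hswap := hF.sum_le _ hcard
  rw [Finset.sum_insert hj', ← Finset.add_sum_erase F f hi] at hswap
  exact le_of_add_le_add_right hswap

lemma mul_apply_le_sum {f : ι → ℝ} (hF : IsTopSupport f k F) (hf : ∀ i, 0 ≤ f i) {j : ι}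
    (hj : j ∉ F) : k * f j ≤ ∑ i ∈ F, f i := by
  classical
  rcases hF.card_le.eq_or_lt with hcard | hcard
  · rw [← hcard, ← nsmul_eq_mul]
    exact Finset.card_nsmul_le_sum F f _ fun i hi => hF.apply_le_apply hi hj
  · have hinsert := hF.sum_le (insert j F) (by rw [Finset.card_insert_of_notMem hj]; lia)
    rw [Finset.sum_insert hj] at hinsert
    have hzero : f j = 0 := le_antisymm (by linarith) (hf j)
    rw [hzero, mul_zero]
    exact Finset.sum_nonneg fun i _ => hf i

variable [Fintype ι] {h : ι → ℝ}

lemma mul_l2norm_indicator_compl_sq_le (hF : IsTopSupport (fun i => |h i|) k F) :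
    k * l2norm ((F : Set ι)ᶜ.indicator h) ^ 2 ≤
      l1norm ((F : Set ι).indicator h) * l1norm ((F : Set ι)ᶜ.indicator h) := by
  rw [l2norm_sq, l1norm_indicator, l1norm, Finset.mul_sum, Finset.mul_sum]
  refine Finset.sum_le_sum fun i _ => ?_
  by_cases hi : i ∈ F
  · simp [hi]
  · have hi' : i ∈ (F : Set ι)ᶜ := by simpa using hi
    rw [Set.indicator_of_mem hi', ← sq_abs, pow_two, ← mul_assoc]
    exact mul_le_mul_of_nonneg_right (hF.mul_apply_le_sum (fun _ => abs_nonneg _) hi)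
      (abs_nonneg _)

lemma sqrt_mul_l2norm_indicator_compl_le (hF : IsTopSupport (fun i => |h i|) k F) :
    √k * l2norm ((F : Set ι)ᶜ.indicator h) ≤ l1norm h / 2 := by
  refine le_of_sq_le_sq ?_ (by linarith [l1norm_nonneg h])
  rw [mul_pow, Real.sq_sqrt k.cast_nonneg, ← l1norm_indicator_add_l1norm_indicator_compl F h]
  linarith [hF.mul_l2norm_indicator_compl_sq_le, four_mul_le_sq_add
    (l1norm ((F : Set ι).indicator h)) (l1norm ((F : Set ι)ᶜ.indicator h))]

lemma sqrt_mul_l2norm_le (hF : IsTopSupport (fun i => |h i|) k F) :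
    √k * l2norm h ≤ √k * l2norm ((F : Set ι).indicator h) + l1norm h / 2 := by
  calc √k * l2norm h
      = √k * l2norm ((F : Set ι).indicator h + (F : Set ι)ᶜ.indicator h) := by
        rw [Set.indicator_self_add_compl]
    _ ≤ √k * l2norm ((F : Set ι).indicator h) + √k * l2norm ((F : Set ι)ᶜ.indicator h) := by
        rw [← mul_add]
        gcongr
        exact l2norm_add_le _ _
    _ ≤ √k * l2norm ((F : Set ι).indicator h) + l1norm h / 2 := by
        gcongr
        exact hF.sqrt_mul_l2norm_indicator_compl_le

end IsTopSupport

end TopSupport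

section Coherence

variable {κ ι : Type*} [Fintype κ]

/-- A matrix with unit columns whose mutual coherence is at most `μ`. -/
structure Incoherent (A : Matrix κ ι ℝ) (μ : ℝ) : Prop where
  l2norm_col : ∀ j, l2norm (A.col j) = 1
  abs_dotProduct_col_le : ∀ i j, i ≠ j → |A.col i ⬝ᵥ A.col j| ≤ μ

namespace Incoherent

variable {A : Matrix κ ι ℝ} {μ : ℝ}

lemma abs_gram_sub_one_apply_le [DecidableEq ι] (hA : Incoherent A μ) (i j : ι) :
    |(Aᵀ * A - 1 : Matrix ι ι ℝ) i j| ≤ μ * (1 - if i = j then 1 else 0) := by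
  have hgram : (Aᵀ * A) i j = A.col i ⬝ᵥ A.col j := rfl
  rw [Matrix.sub_apply, hgram]
  obtain rfl | hij := eq_or_ne i j
  · simp [dotProduct_self_eq_l2norm_sq, hA.l2norm_col]
  · simpa [hij] using hA.abs_dotProduct_col_le i j hij

variable [Fintype ι]

lemma abs_mulVec_dotProduct_mulVec_sub_le (hA : Incoherent A μ) (u v : ι → ℝ) :
    |A *ᵥ u ⬝ᵥ A *ᵥ v - u ⬝ᵥ v| ≤ μ * (l1norm u * l1norm v - ∑ i, |u i * v i|) := by
  classical
  have hgram : A *ᵥ u ⬝ᵥ A *ᵥ v - u ⬝ᵥ v = u ⬝ᵥ (Aᵀ * A - 1) *ᵥ v := by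
    rw [Matrix.sub_mulVec, Matrix.one_mulVec, dotProduct_sub, ← Matrix.mulVec_mulVec,
      Matrix.dotProduct_mulVec u, Matrix.vecMul_transpose]
  calc |A *ᵥ u ⬝ᵥ A *ᵥ v - u ⬝ᵥ v|
      = |∑ i, ∑ j, u i * ((Aᵀ * A - 1 : Matrix ι ι ℝ) i j * v j)| := by
        rw [hgram]
        simp only [dotProduct, Matrix.mulVec, Finset.mul_sum]
    _ ≤ ∑ i, ∑ j, |u i * ((Aᵀ * A - 1 : Matrix ι ι ℝ) i j * v j)| :=
        (Finset.abs_sum_le_sum_abs _ _).trans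
          (Finset.sum_le_sum fun _ _ => Finset.abs_sum_le_sum_abs _ _)
    _ ≤ ∑ i, ∑ j, |u i| * (μ * (1 - if i = j then 1 else 0) * |v j|) := by
        simp only [abs_mul]
        gcongr with i _ j _
        exact hA.abs_gram_sub_one_apply_le i j
    _ = ∑ i, (μ * (|u i| * ∑ j, |v j|) - μ * |u i * v i|) := by
        refine Finset.sum_congr rfl fun i _ => ?_
        simp only [mul_sub, sub_mul, mul_ite, ite_mul, mul_one, mul_zero, zero_mul,
          Finset.sum_sub_distrib, Finset.sum_ite_eq, Finset.mem_univ, if_true, abs_mul,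
          Finset.mul_sum]
        simp only [mul_left_comm]
    _ = μ * (l1norm u * l1norm v - ∑ i, |u i * v i|) := by
        rw [Finset.sum_sub_distrib, ← Finset.mul_sum, ← Finset.mul_sum, ← Finset.sum_mul,
          ← mul_sub, l1norm, l1norm]

lemma abs_mulVec_dotProduct_mulVec_le (hA : Incoherent A μ) {u w : ι → ℝ}
    (huw : ∀ i, u i * w i = 0) : |A *ᵥ u ⬝ᵥ A *ᵥ w| ≤ μ * (l1norm u * l1norm w) := by
  simpa [dotProduct, huw] using hA.abs_mulVec_dotProduct_mulVec_sub_le u w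

lemma abs_l2norm_mulVec_sq_sub_le (hA : Incoherent A μ) (hμ : 0 ≤ μ) {k : ℕ} {u : ι → ℝ}
    (hu : #{i | u i ≠ 0} ≤ k) :
    |l2norm (A *ᵥ u) ^ 2 - l2norm u ^ 2| ≤ (k - 1) * μ * l2norm u ^ 2 := by
  calc |l2norm (A *ᵥ u) ^ 2 - l2norm u ^ 2|
      ≤ μ * (l1norm u ^ 2 - l2norm u ^ 2) := by
        simpa only [dotProduct_self_eq_l2norm_sq, ← pow_two, abs_sq, ← l2norm_sq]
          using hA.abs_mulVec_dotProduct_mulVec_sub_le u u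
    _ ≤ μ * (k * l2norm u ^ 2 - l2norm u ^ 2) := by
        gcongr
        exact l1norm_sq_le_of_card_support_le hu
    _ = (k - 1) * μ * l2norm u ^ 2 := by ring

lemma l2norm_mulVec_le (hA : Incoherent A μ) (hμ : 0 ≤ μ) {k : ℕ} {u : ι → ℝ}
    (hu : #{i | u i ≠ 0} ≤ k) :
    l2norm (A *ᵥ u) ≤ √(1 + (k - 1) * μ) * l2norm u := by
  rw [← Real.sqrt_sq (l2norm_nonneg u), ← Real.sqrt_mul' _ (sq_nonneg _)]
  apply Real.le_sqrt_of_sq_le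
  linarith [(abs_le.mp (hA.abs_l2norm_mulVec_sq_sub_le hμ hu)).2]

lemma l2norm_le_of_disjoint_support (hA : Incoherent A μ) (hμ : 0 ≤ μ) {k : ℕ}
    (hkμ : 0 < 1 - ((k : ℝ) - 1) * μ) {u w : ι → ℝ} (hu : #{i | u i ≠ 0} ≤ k)
    (huw : ∀ i, u i * w i = 0) :
    l2norm u ≤ alpha1 k μ * l2norm (A *ᵥ (u + w)) + alpha2 k μ * l1norm w := by
  set S := √(1 + ((k : ℝ) - 1) * μ) * l2norm (A *ᵥ (u + w)) + √k * μ * l1norm w with hS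
  have hS₀ : 0 ≤ S := by
    have := l2norm_nonneg (A *ᵥ (u + w))
    have := l1norm_nonneg w
    positivity
  have hmul : (1 - ((k : ℝ) - 1) * μ) * l2norm u * l2norm u ≤ S * l2norm u := by
    calc (1 - ((k : ℝ) - 1) * μ) * l2norm u * l2norm u
        ≤ l2norm (A *ᵥ u) ^ 2 := by
          linarith [(abs_le.mp (hA.abs_l2norm_mulVec_sq_sub_le hμ hu)).1]
      _ = A *ᵥ u ⬝ᵥ A *ᵥ (u + w) - A *ᵥ u ⬝ᵥ A *ᵥ w := by
          rw [Matrix.mulVec_add, dotProduct_add, dotProduct_self_eq_l2norm_sq, add_sub_cancel_right]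
      _ ≤ l2norm (A *ᵥ u) * l2norm (A *ᵥ (u + w)) + μ * (l1norm u * l1norm w) := by
          linarith [dotProduct_le_l2norm_mul_l2norm (A *ᵥ u) (A *ᵥ (u + w)),
            (abs_le.mp (hA.abs_mulVec_dotProduct_mulVec_le huw)).1]
      _ ≤ √(1 + ((k : ℝ) - 1) * μ) * l2norm u * l2norm (A *ᵥ (u + w)) +
            μ * (√k * l2norm u * l1norm w) := by
          gcongr
          · exact l2norm_nonneg _
          · exact hA.l2norm_mulVec_le hμ hu
          · exact l1norm_nonneg w
          · exact l1norm_le_sqrt_mul_l2norm_of_card_support_le hu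
      _ = S * l2norm u := by rw [hS]; ring
  have hle : (1 - ((k : ℝ) - 1) * μ) * l2norm u ≤ S := by
    rcases (l2norm_nonneg u).eq_or_lt with hzero | hpos
    · rwa [← hzero, mul_zero]
    · exact le_of_mul_le_mul_right hmul hpos
  calc l2norm u ≤ S / (1 - ((k : ℝ) - 1) * μ) := by rwa [le_div_iff₀' hkμ]
    _ = alpha1 k μ * l2norm (A *ᵥ (u + w)) + alpha2 k μ * l1norm w := by
        rw [hS, alpha1, alpha2]; ring

lemma sqrt_mul_l2norm_indicator_le (hA : Incoherent A μ) (hμ₀ : 0 ≤ μ) {k : ℕ}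
    (hkμ : 0 < 1 - ((k : ℝ) - 1) * μ) {F : Finset ι} (hF : #F ≤ k) (h : ι → ℝ) :
    √k * l2norm ((F : Set ι).indicator h) ≤
      √k * alpha1 k μ * l2norm (A *ᵥ h) +
        √k * alpha2 k μ * l1norm ((F : Set ι)ᶜ.indicator h) := by
  have hlocal := hA.l2norm_le_of_disjoint_support hμ₀ hkμ (card_support_indicator_le hF h)
    (w := (F : Set ι)ᶜ.indicator h) (fun i => by by_cases hi : i ∈ F <;> simp [hi])
  rw [Set.indicator_self_add_compl] at hlocal
  linarith [mul_le_mul_of_nonneg_left hlocal (Real.sqrt_nonneg k)]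

end Incoherent

lemma mutualCoherence_nonneg {m n : ℕ} (A : Matrix (Fin m) (Fin n) ℝ) : 0 ≤ mutualCoherence A :=
  Real.iSup_nonneg fun _ => abs_nonneg _

lemma incoherent_mutualCoherence {m n : ℕ} {A : Matrix (Fin m) (Fin n) ℝ}
    (hA : ∀ j, l2norm (A.col j) = 1) : Incoherent A (mutualCoherence A) where
  l2norm_col := hA
  abs_dotProduct_col_le i j hij :=
    le_ciSup (f := fun p : {p : Fin n × Fin n // p.1 ≠ p.2} => |∑ r, A r p.1.1 * A r p.1.2|)
      (Set.finite_range _).bddAbove ⟨(i, j), hij⟩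

end Coherence

section Lasso

variable {κ ι : Type*} [Fintype κ] [Fintype ι] {A : Matrix κ ι ℝ} {b : κ → ℝ} {x y : ι → ℝ}
  {ε lam : ℝ}

lemma l2norm_mulVec_sub_sq_le_of_objective_le (hb : l2norm (b - A *ᵥ x) ≤ ε) (hlam : 0 < lam)
    (hobj : l1norm y + 1 / (2 * lam) * l2norm (b - A *ᵥ y) ^ 2 ≤
      l1norm x + 1 / (2 * lam) * l2norm (b - A *ᵥ x) ^ 2) :
    l2norm (A *ᵥ (y - x)) ^ 2 ≤
      2 * ε * l2norm (A *ᵥ (y - x)) + 2 * lam * (l1norm x - l1norm y) := by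
  have hres : b - A *ᵥ y = (b - A *ᵥ x) - A *ᵥ (y - x) := by
    rw [Matrix.mulVec_sub]; abel
  rw [hres, l2norm_sub_sq] at hobj
  have hnoise : (b - A *ᵥ x) ⬝ᵥ A *ᵥ (y - x) ≤ ε * l2norm (A *ᵥ (y - x)) :=
    (dotProduct_le_l2norm_mul_l2norm _ _).trans
      (mul_le_mul_of_nonneg_right hb (l2norm_nonneg _))
  field_simp at hobj
  linarith

lemma l2norm_mulVec_sub_sq_le_of_isTopSupport {k : ℕ} {F : Finset ι} {w : ι → ℝ}
    (hb : l2norm (b - A *ᵥ x) ≤ ε) (hlam : 0 < lam)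
    (hobj : l1norm y + 1 / (2 * lam) * l2norm (b - A *ᵥ y) ^ 2 ≤
      l1norm x + 1 / (2 * lam) * l2norm (b - A *ᵥ x) ^ 2)
    (hF : IsTopSupport (fun i => |(y - x) i|) k F) (hw : #{i | w i ≠ 0} ≤ k) :
    l2norm (A *ᵥ (y - x)) ^ 2 ≤ 2 * ε * l2norm (A *ᵥ (y - x)) +
      2 * lam * (l1norm ((F : Set ι).indicator (y - x)) -
        l1norm ((F : Set ι)ᶜ.indicator (y - x)) + 2 * l1norm (x - w)) := by
  refine (l2norm_mulVec_sub_sq_le_of_objective_le hb hlam hobj).trans ?_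
  gcongr
  linarith [l1norm_sub_l1norm_le x y w, hF.sum_le _ hw, l1norm_indicator F (y - x),
    l1norm_indicator_add_l1norm_indicator_compl F (y - x)]

end Lasso

section Constants

lemma le_two_mul_add_div_of_sq_le {t D B : ℝ} (hD : 0 < D) (hB : 0 ≤ B)
    (h : t ^ 2 ≤ 2 * D * t + B) : t ≤ 2 * D + B / (2 * D) := by
  have hdiv : 0 ≤ B / (2 * D) := by positivity
  have hmul : 2 * D * (B / (2 * D)) = B := by field_simp
  by_contra! hlt
  nlinarith

variable {s a lam ε p t σ N R : ℝ}

/-- The substitutions `X = σ / D` and `Y = D / lam` make both estimates, on `t` and on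
`(1 - s) * p`, linear in `X` and `Y`. -/
lemma one_sub_mul_error_le_of_quadratic (hs : 0 ≤ s) (hs' : s < 1) (ha : 0 < a) (hlam : 0 < lam)
    (hε : 0 ≤ ε) (hp : 0 ≤ p) (hσ : 0 ≤ σ)
    (hquad : t ^ 2 + 2 * lam * ((1 - s) * p) ≤ 2 * (a * lam + ε) * t + 4 * lam * σ)
    (hN : R * N ≤ 3 / 2 * a * t + (3 * s + 1) / 2 * p) :
    (1 - s) * (R * N) ≤ (4 * (a * lam) + (3 * s + 1) * ε) * (σ / (a * lam + ε)) +
      ((13 - 9 * s) / 4 * (a * lam) + (3 * s + 1) / 4 * ε) * ((a * lam + ε) / lam) := by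
  have : 0 < 1 - s := sub_pos.mpr hs'
  set D := a * lam + ε with hD
  have hD₀ : 0 < D := by positivity
  have ht : t ≤ 2 * lam * (σ / D + D / lam) := by
    have htail : 0 ≤ 2 * lam * ((1 - s) * p) := by positivity
    have hroot := le_two_mul_add_div_of_sq_le (t := t) hD₀
      (show 0 ≤ 4 * lam * σ by positivity) (by linarith)
    have hsubst : 2 * D + 4 * lam * σ / (2 * D) = 2 * lam * (σ / D + D / lam) := by
      field_simp
      ring
    rwa [hsubst] at hroot
  have hp' : (1 - s) * p ≤ D * (2 * (σ / D) + D / lam / 2) := by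
    have hsq : 2 * lam * ((1 - s) * p) ≤ 4 * lam * σ + D ^ 2 := by
      linarith [sq_nonneg (t - D)]
    have : D * (2 * (σ / D) + D / lam / 2) = (4 * lam * σ + D ^ 2) / (2 * lam) := by
      field_simp
      ring
    rwa [this, le_div_iff₀' (by positivity)]
  calc (1 - s) * (R * N)
      ≤ (1 - s) * (3 / 2 * a * t + (3 * s + 1) / 2 * p) := by gcongr
    _ = 3 / 2 * (1 - s) * a * t + (3 * s + 1) / 2 * ((1 - s) * p) := by ring
    _ ≤ 3 / 2 * (1 - s) * a * (2 * lam * (σ / D + D / lam)) +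
          (3 * s + 1) / 2 * (D * (2 * (σ / D) + D / lam / 2)) := by gcongr
    _ = _ := by
      generalize σ / D = X
      generalize D / lam = Y
      rw [hD]
      ring

lemma error_le_of_quadratic (hs : 0 ≤ s) (hs' : s < 1) (ha : 0 < a) (hlam : 0 < lam) (hε : 0 ≤ ε)
    (hp : 0 ≤ p) (hσ : 0 ≤ σ) (hR : 0 < R)
    (hquad : t ^ 2 + 2 * lam * ((1 - s) * p) ≤ 2 * (a * lam + ε) * t + 4 * lam * σ)
    (hN : R * N ≤ 3 / 2 * a * t + (3 * s + 1) / 2 * p) :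
    N ≤ (2 * a * (s ^ 2 + 3 * s + 3) * lam + 2 * (2 * s ^ 2 + 4 * s + 1) * ε) /
        (R * (1 - s) * (a * lam + ε)) * σ +
      (a * (5 + 2 * s) * lam + 2 * (2 * s ^ 2 + 4 * s + 1) * ε) * (a * lam + ε) /
        (R * (1 - s) * lam) := by
  have hs₁ : 0 < 1 - s := sub_pos.mpr hs'
  have hbound := one_sub_mul_error_le_of_quadratic hs hs' ha hlam hε hp hσ hquad hN
  have : 0 < a * lam := mul_pos ha hlam
  have hC₃ : 4 * (a * lam) + (3 * s + 1) * ε ≤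
      2 * a * (s ^ 2 + 3 * s + 3) * lam + 2 * (2 * s ^ 2 + 4 * s + 1) * ε := by
    have : 0 ≤ (2 * s ^ 2 + 6 * s + 2) * (a * lam) + (4 * s ^ 2 + 5 * s + 1) * ε := by positivity
    linarith
  have hC₄ : (13 - 9 * s) / 4 * (a * lam) + (3 * s + 1) / 4 * ε ≤
      a * (5 + 2 * s) * lam + 2 * (2 * s ^ 2 + 4 * s + 1) * ε := by
    have : 0 ≤ (7 + 17 * s) / 4 * (a * lam) + (16 * s ^ 2 + 29 * s + 7) / 4 * ε := by positivity
    linarith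
  calc N = (1 - s) * (R * N) / (R * (1 - s)) := by field_simp
    _ ≤ ((2 * a * (s ^ 2 + 3 * s + 3) * lam + 2 * (2 * s ^ 2 + 4 * s + 1) * ε) *
          (σ / (a * lam + ε)) +
        (a * (5 + 2 * s) * lam + 2 * (2 * s ^ 2 + 4 * s + 1) * ε) * ((a * lam + ε) / lam)) /
          (R * (1 - s)) := by
      gcongr
      exact hbound.trans (by gcongr)
    _ = _ := by field_simp

variable {k : ℕ} {μ : ℝ}

lemma fk_eq_sqrt_mul (k : ℕ) (t : ℝ) : fk k t = (√k * t) ^ 2 + 3 * (√k * t) + 3 := by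
  rw [fk, mul_pow, Real.sq_sqrt k.cast_nonneg]; ring

lemma gk_eq_sqrt_mul (k : ℕ) (t : ℝ) : gk k t = 2 * (√k * t) ^ 2 + 4 * (√k * t) + 1 := by
  rw [gk, mul_pow, Real.sq_sqrt k.cast_nonneg]; ring

/-- For `k = 0` the hypothesis reads `μ < -1`. -/
lemma pos_of_lt_one_div_two_mul_sub_one (hμ₀ : 0 ≤ μ) (hμ : μ < 1 / (2 * (k : ℝ) - 1)) :
    0 < k := by
  rcases k.eq_zero_or_pos with rfl | hk
  · norm_num at hμ
    linarith
  · exact hk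

lemma natCast_mul_lt_one_sub (hμ₀ : 0 ≤ μ) (hμ : μ < 1 / (2 * (k : ℝ) - 1)) :
    k * μ < 1 - (k - 1) * μ := by
  have hk : (1 : ℝ) ≤ k := by exact_mod_cast pos_of_lt_one_div_two_mul_sub_one hμ₀ hμ
  rw [lt_div_iff₀ (by linarith)] at hμ
  linarith

lemma one_sub_pos_of_lt (hμ₀ : 0 ≤ μ) (hμ : μ < 1 / (2 * (k : ℝ) - 1)) :
    0 < 1 - ((k : ℝ) - 1) * μ :=
  (mul_nonneg k.cast_nonneg hμ₀).trans_lt (natCast_mul_lt_one_sub hμ₀ hμ)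

lemma alpha1_pos (hμ₀ : 0 ≤ μ) (hμ : μ < 1 / (2 * (k : ℝ) - 1)) : 0 < alpha1 k μ := by
  have hk : (1 : ℝ) ≤ k := by exact_mod_cast pos_of_lt_one_div_two_mul_sub_one hμ₀ hμ
  have hnum : 0 < 1 + ((k : ℝ) - 1) * μ := by
    linarith [mul_nonneg (sub_nonneg.mpr hk) hμ₀]
  exact div_pos (Real.sqrt_pos.mpr hnum) (one_sub_pos_of_lt hμ₀ hμ)

lemma sqrt_mul_alpha2 (k : ℕ) (μ : ℝ) : √k * alpha2 k μ = k * μ / (1 - (k - 1) * μ) := by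
  rw [alpha2, ← mul_div_assoc, ← mul_assoc, Real.mul_self_sqrt k.cast_nonneg]

lemma sqrt_mul_alpha2_nonneg (hμ₀ : 0 ≤ μ) (hμ : μ < 1 / (2 * (k : ℝ) - 1)) :
    0 ≤ √k * alpha2 k μ := by
  rw [sqrt_mul_alpha2]
  exact div_nonneg (mul_nonneg k.cast_nonneg hμ₀) (one_sub_pos_of_lt hμ₀ hμ).le

lemma sqrt_mul_alpha2_lt_one (hμ₀ : 0 ≤ μ) (hμ : μ < 1 / (2 * (k : ℝ) - 1)) :
    √k * alpha2 k μ < 1 := by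
  rw [sqrt_mul_alpha2, div_lt_one (one_sub_pos_of_lt hμ₀ hμ)]
  exact natCast_mul_lt_one_sub hμ₀ hμ

end Constants

theorem stmt_6_general {κ ι : Type*} [Fintype κ] [Fintype ι] {A : Matrix κ ι ℝ} {μ : ℝ}
    (hA : Incoherent A μ) (hμ₀ : 0 ≤ μ) {k : ℕ} (hμ : μ < 1 / (2 * (k : ℝ) - 1))
    {b : κ → ℝ} {x xs xk : ι → ℝ} {ε lam : ℝ} (hb : l2norm (b - A *ᵥ x) ≤ ε) (hlam : 0 < lam)
    (hobj : l1norm xs + 1 / (2 * lam) * l2norm (b - A *ᵥ xs) ^ 2 ≤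
      l1norm x + 1 / (2 * lam) * l2norm (b - A *ᵥ x) ^ 2)
    (hxk : #{i | xk i ≠ 0} ≤ k) :
    l2norm (xs - x) ≤
      (2 * √k * alpha1 k μ * fk k (alpha2 k μ) * lam + 2 * gk k (alpha2 k μ) * ε) /
          (√k * (1 - √k * alpha2 k μ) * (√k * alpha1 k μ * lam + ε)) * l1norm (x - xk) +
        (√k * alpha1 k μ * (5 + 2 * √k * alpha2 k μ) * lam + 2 * gk k (alpha2 k μ) * ε) *
          (√k * alpha1 k μ * lam + ε) / (√k * (1 - √k * alpha2 k μ) * lam) := by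
  obtain ⟨F, hF⟩ := exists_isTopSupport (fun i => |(xs - x) i|) k
  have hk : 0 < √(k : ℝ) :=
    Real.sqrt_pos.mpr (Nat.cast_pos.mpr (pos_of_lt_one_div_two_mul_sub_one hμ₀ hμ))
  have hhead := hA.sqrt_mul_l2norm_indicator_le hμ₀ (one_sub_pos_of_lt hμ₀ hμ) hF.card_le (xs - x)
  have hheadl1 := (l1norm_le_sqrt_mul_l2norm_of_card_support_le
    (card_support_indicator_le hF.card_le (xs - x))).trans hhead
  have hopt := l2norm_mulVec_sub_sq_le_of_isTopSupport hb hlam hobj hF hxk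
  have hnorm := hF.sqrt_mul_l2norm_le
  rw [← l1norm_indicator_add_l1norm_indicator_compl F] at hnorm
  set t := l2norm (A *ᵥ (xs - x))
  set p := l1norm ((F : Set ι)ᶜ.indicator (xs - x))
  have hquad : t ^ 2 + 2 * lam * ((1 - √k * alpha2 k μ) * p) ≤
      2 * (√k * alpha1 k μ * lam + ε) * t + 4 * lam * l1norm (x - xk) := by
    linarith [mul_le_mul_of_nonneg_left hheadl1 hlam.le]
  have hN : √k * l2norm (xs - x) ≤
      3 / 2 * (√k * alpha1 k μ) * t + (3 * (√k * alpha2 k μ) + 1) / 2 * p := by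
    linarith
  have hbound := error_le_of_quadratic (sqrt_mul_alpha2_nonneg hμ₀ hμ)
    (sqrt_mul_alpha2_lt_one hμ₀ hμ) (mul_pos hk (alpha1_pos hμ₀ hμ)) hlam
    ((l2norm_nonneg _).trans hb) (l1norm_nonneg _) (l1norm_nonneg _) hk hquad hN
  rw [fk_eq_sqrt_mul, gk_eq_sqrt_mul]
  simpa only [mul_assoc] using hbound

theorem stmt_6 {m n : ℕ} (A : Matrix (Fin m) (Fin n) ℝ)
    (hA : ∀ j, l2norm (fun i => A i j) = 1)
    (k : ℕ) (hk : 2 ≤ k)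
    (hμ : mutualCoherence A < 1 / (2 * (k : ℝ) - 1))
    (x : Fin n → ℝ) (z : Fin m → ℝ) (b : Fin m → ℝ) (hb : b = A.mulVec x + z)
    (ε lam : ℝ) (hz : l2norm z ≤ ε) (hlam : 0 < lam)
    (xs : Fin n → ℝ)
    (hmin : ∀ u : Fin n → ℝ,
      l1norm xs + 1 / (2 * lam) * l2norm (b - A.mulVec xs) ^ 2 ≤
        l1norm u + 1 / (2 * lam) * l2norm (b - A.mulVec u) ^ 2)
    (xk : Fin n → ℝ) (hxk1 : sparse k xk)
    (hxk2 : ∀ y : Fin n → ℝ, sparse k y → l2norm (xk - x) ≤ l2norm (y - x)) :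
    l2norm (xs - x) ≤
      (2 * Real.sqrt k * alpha1 k (mutualCoherence A) * fk k (alpha2 k (mutualCoherence A)) * lam
          + 2 * gk k (alpha2 k (mutualCoherence A)) * ε)
        / (Real.sqrt k * (1 - Real.sqrt k * alpha2 k (mutualCoherence A))
          * (Real.sqrt k * alpha1 k (mutualCoherence A) * lam + ε)) * l1norm (x - xk)
      + (Real.sqrt k * alpha1 k (mutualCoherence A)
            * (5 + 2 * Real.sqrt k * alpha2 k (mutualCoherence A)) * lam
          + 2 * gk k (alpha2 k (mutualCoherence A)) * ε)
        * (Real.sqrt k * alpha1 k (mutualCoherence A) * lam + ε)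
        / (Real.sqrt k * (1 - Real.sqrt k * alpha2 k (mutualCoherence A)) * lam) :=
  stmt_6_general (incoherent_mutualCoherence hA) (mutualCoherence_nonneg A) hμ
    (by simpa [hb] using hz) hlam (hmin x) hxk1
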